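/- Let q ∈ (0,1), α ∈ (-1,∞), and m, n ∈ ℕ₀. Then ∫_0^∞ L_m^{(α)}(x;q) L_n^{(α)}(x;q) · x^α / (-x;q)_∞ dx = -(δ_{m,n} / q^n) · A, where A = π (q^{-α};q)_∞ (q^{α+1};q)_n / ( sin(πα) (q;q)_∞ (q;q)_n ) if α ∈ (-1,∞)\ℕ₀, and A = (q^{n+1};q)_α (log q) / q^{α(α+1)/2} if α ∈ ℕ₀ (here δ_{m,n} is the Kronecker delta). -/

import Mathlib

/-!
Put `M(s) = ∫_0^∞ x^{s-1}/(-x;q)_∞ dx` for `Re s > 0`. Since `(-x;q)_∞ = (1+x)(-qx;q)_∞`,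
rescaling `x ↦ qx` gives `M(s+1) = (q^{-s} - 1) M(s)`, a two-term recurrence for the moments of the
weight, and this alone forces orthogonality. Indeed, with `a = q^{α+1}`, integrating `L_n` against
`x^j` leaves a multiple of `∑_k (q^{-n};q)_k/(q;q)_k q^{(n-j)k} (aq^k;q)_j`, which by the
terminating `q`-binomial theorem is `0` for `j < n` and `(q^{-n};q)_n` for `j = n`. Only the leading
coefficient of `L_m` then contributes, so the integral is `δ_{mn} q^{-n} M(α+1) (a;q)_n/(q;q)_n`.

To evaluate `M`, truncate the product: with `M_N(s) = ∫_0^∞ x^{s-1}/(-x;q)_N dx`, the two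
factorizations `(-x;q)_{N+1} = (1+x)(-qx;q)_N = (-x;q)_N(1+xq^N)` give
`(1-q^N) M_{N+1}(s) = (1-q^{N-s}) M_N(s)`. On the strip `0 < Re s < 1` this starts from Euler's
`M_1(s) = π/sin(πs)`, and `N → ∞` yields Ramanujan's `M(s) (q;q)_∞ sin(πs) = π (q^{1-s};q)_∞`, which
extends to `Re s > 0` by the identity theorem. At positive integers both sides vanish; there
`M(1) = -log q` is a Frullani integral, and the recurrence for `M` gives the other values.
-/

open scoped Real

/-- The complex `q`-Pochhammer symbol `(a;q)_n`. -/
noncomputable def qP (a q : ℂ) (n : ℕ) : ℂ := ∏ k ∈ Finset.range n, (1 - a * q ^ k)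

/-- The infinite complex `q`-Pochhammer symbol `(a;q)_∞`. -/
noncomputable def qPInf (a q : ℂ) : ℂ := ∏' k : ℕ, (1 - a * q ^ k)

/-- The basic hypergeometric series `ᵣφₛ(a₁,…,aᵣ; b₁,…,bₛ; q, z)`. -/
noncomputable def qHyp (A B : List ℂ) (q z : ℂ) : ℂ :=
  ∑' k : ℕ, ((A.map fun a => qP a q k).prod / (qP q q k * (B.map fun b => qP b q k).prod)) *
    ((-1 : ℂ) ^ k * q ^ (k * (k - 1) / 2)) ^ (1 + B.length - A.length) * z ^ k

/-- The positive real power `q ^ e` of `0 < q`, viewed as a complex number. -/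
noncomputable def rq (q e : ℝ) : ℂ := ((q ^ e : ℝ) : ℂ)

/-- The `q`-Laguerre polynomial `Lₙ^{(α)}(x; q)`. -/
noncomputable def qLag (n : ℕ) (α q : ℝ) (x : ℂ) : ℂ :=
  (qP (rq q (α + 1)) q n / qP q q n) *
    qHyp [(q : ℂ) ^ (-(n : ℤ))] [rq q (α + 1)] q (-(rq q ((n : ℝ) + α + 1)) * x)

open MeasureTheory Set Filter Topology Asymptotics

/-! ### Finite `q`-shifted factorials -/

section FiniteProducts

variable {a q : ℂ}

lemma qP_zero (a q : ℂ) : qP a q 0 = 1 := Finset.prod_range_zero _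

lemma qP_succ (a q : ℂ) (n : ℕ) : qP a q (n + 1) = qP a q n * (1 - a * q ^ n) :=
  Finset.prod_range_succ _ _

lemma qP_add (a q : ℂ) (m n : ℕ) : qP a q (m + n) = qP a q m * qP (a * q ^ m) q n := by
  simp only [qP, Finset.prod_range_add, pow_add, mul_assoc]

lemma qP_succ_left (a q : ℂ) (n : ℕ) : qP a q (n + 1) = (1 - a) * qP (a * q) q n := by
  simpa [qP, add_comm] using qP_add a q 1 n

lemma qP_mul_qP_comm (a q : ℂ) (m n : ℕ) :
    qP a q m * qP (a * q ^ m) q n = qP a q n * qP (a * q ^ n) q m := by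
  rw [← qP_add, ← qP_add, add_comm]

lemma qP_eq_zero {i n : ℕ} (hi : i < n) (h : a * q ^ i = 1) : qP a q n = 0 :=
  Finset.prod_eq_zero (Finset.mem_range.2 hi) (by rw [h, sub_self])

lemma qP_inv_pow_eq_zero (hq : q ≠ 0) {n k : ℕ} (h : n < k) : qP (q ^ n)⁻¹ q k = 0 :=
  qP_eq_zero h (inv_mul_cancel₀ (pow_ne_zero n hq))

lemma qP_inv_pow_succ (hq : q ≠ 0) (n k : ℕ) :
    qP (q ^ (n + 1))⁻¹ q (k + 1) = (1 - (q ^ (n + 1))⁻¹) * qP (q ^ n)⁻¹ q k := by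
  rw [qP_succ_left, pow_succ, mul_inv, inv_mul_cancel_right₀ hq]

lemma one_sub_mul_pow_ne_zero (ha : ‖a‖ < 1) (hq : ‖q‖ ≤ 1) (k : ℕ) : 1 - a * q ^ k ≠ 0 := by
  have hlt : ‖a * q ^ k‖ < 1 := by
    rw [norm_mul, norm_pow]
    exact mul_lt_one_of_nonneg_of_lt_one_left (norm_nonneg _) ha (pow_le_one₀ (norm_nonneg _) hq)
  intro h
  rw [← sub_eq_zero.1 h, norm_one] at hlt
  exact lt_irrefl _ hlt

lemma qP_ne_zero (ha : ‖a‖ < 1) (hq : ‖q‖ ≤ 1) (n : ℕ) : qP a q n ≠ 0 :=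
  Finset.prod_ne_zero_iff.2 fun k _ => one_sub_mul_pow_ne_zero ha hq k

lemma qP_inv_pow_self_sq (hq : q ≠ 0) (n : ℕ) :
    q ^ (n * n) * q ^ n * qP (q ^ n)⁻¹ q n ^ 2 = qP q q n ^ 2 := by
  induction n with
  | zero => simp [qP_zero]
  | succ n ih =>
    have hfactor : q ^ (n + 1) * (1 - (q ^ (n + 1))⁻¹) = -(1 - q * q ^ n) := by
      rw [mul_sub, mul_inv_cancel₀ (pow_ne_zero _ hq), pow_succ']
      ring
    calc q ^ ((n + 1) * (n + 1)) * q ^ (n + 1) * qP (q ^ (n + 1))⁻¹ q (n + 1) ^ 2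
        = (q ^ (n * n) * q ^ n * qP (q ^ n)⁻¹ q n ^ 2) *
            (q ^ (n + 1) * (1 - (q ^ (n + 1))⁻¹)) ^ 2 := by
          rw [qP_inv_pow_succ hq]
          ring
      _ = qP q q (n + 1) ^ 2 := by
          rw [ih, hfactor, qP_succ]
          ring

lemma qP_inv_pow_div_pascal (hq : q ≠ 0) (hP : ∀ k, qP q q k ≠ 0) (n k : ℕ) :
    qP (q ^ (n + 1))⁻¹ q (k + 1) / qP q q (k + 1) =
      qP (q ^ n)⁻¹ q (k + 1) / qP q q (k + 1) -
        (q ^ (n + 1))⁻¹ * (qP (q ^ n)⁻¹ q k / qP q q k) := by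
  have hk := hP k
  have hk' : 1 - q * q ^ k ≠ 0 := right_ne_zero_of_mul (qP_succ q q k ▸ hP (k + 1))
  rw [qP_inv_pow_succ hq, qP_succ (q ^ n)⁻¹, qP_succ q]
  field_simp
  ring

/-- The terminating `q`-binomial theorem. -/
lemma sum_qP_inv_pow_div_mul_pow (hq : q ≠ 0) (hP : ∀ k, qP q q k ≠ 0) (n : ℕ) (z : ℂ) :
    ∑ k ∈ Finset.range (n + 1), qP (q ^ n)⁻¹ q k / qP q q k * z ^ k = qP (z * (q ^ n)⁻¹) q n := by
  induction n with
  | zero => simp [qP_zero]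
  | succ n ih =>
    have hlong : ∑ k ∈ Finset.range (n + 1),
        qP (q ^ n)⁻¹ q (k + 1) / qP q q (k + 1) * z ^ (k + 1) + 1 = qP (z * (q ^ n)⁻¹) q n := by
      have h := Finset.sum_range_succ' (fun k => qP (q ^ n)⁻¹ q k / qP q q k * z ^ k) (n + 1)
      rw [Finset.sum_range_succ, qP_inv_pow_eq_zero hq (Nat.lt_succ_self n), ih] at h
      simpa [qP_zero] using h.symm
    have hshift : ∑ k ∈ Finset.range (n + 1),
        (q ^ (n + 1))⁻¹ * (qP (q ^ n)⁻¹ q k / qP q q k) * z ^ (k + 1) =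
          z * (q ^ (n + 1))⁻¹ * qP (z * (q ^ n)⁻¹) q n := by
      rw [← ih, Finset.mul_sum]
      exact Finset.sum_congr rfl fun k _ => by ring
    have hparam : z * (q ^ (n + 1))⁻¹ * q = z * (q ^ n)⁻¹ := by
      rw [pow_succ, mul_inv, mul_assoc, inv_mul_cancel_right₀ hq]
    rw [Finset.sum_range_succ', qP_succ_left, hparam]
    simp only [qP_inv_pow_div_pascal hq hP, sub_mul, Finset.sum_sub_distrib, hshift, qP_zero,
      div_one, pow_zero, mul_one]
    linear_combination hlong

/- Peeling the last linear factor off `(aq^k;q)_j` lowers `j` and turns `e` into `e` or `e + 1`; at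
`j = 0` the `q`-binomial theorem gives `(q^{e-n};q)_n`, which vanishes unless `e = 0`. -/
lemma sum_qP_inv_pow_div_mul_qP (hq : q ≠ 0) (hP : ∀ k, qP q q k ≠ 0) (a : ℂ) {n j e : ℕ}
    (hje : j + e ≤ n) :
    ∑ k ∈ Finset.range (n + 1), qP (q ^ n)⁻¹ q k / qP q q k * (q ^ e) ^ k * qP (a * q ^ k) q j =
      if e = 0 then qP (q ^ n)⁻¹ q n else 0 := by
  induction j generalizing e with
  | zero =>
    simp only [qP_zero, mul_one]
    rw [sum_qP_inv_pow_div_mul_pow hq hP]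
    split_ifs with he
    · rw [he, pow_zero, one_mul]
    · refine qP_eq_zero (i := n - e) (by lia) ?_
      rw [mul_right_comm, ← pow_add, show e + (n - e) = n by lia,
        mul_inv_cancel₀ (pow_ne_zero n hq)]
  | succ j ih =>
    have hpeel : ∀ k, qP (q ^ n)⁻¹ q k / qP q q k * (q ^ e) ^ k * qP (a * q ^ k) q (j + 1) =
        qP (q ^ n)⁻¹ q k / qP q q k * (q ^ e) ^ k * qP (a * q ^ k) q j - a * q ^ j *
          (qP (q ^ n)⁻¹ q k / qP q q k * (q ^ (e + 1)) ^ k * qP (a * q ^ k) q j) := by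
      intro k
      rw [qP_succ]
      ring
    simp only [hpeel, Finset.sum_sub_distrib]
    rw [← Finset.mul_sum, ih (e := e) (by lia), ih (e := e + 1) (by lia),
      if_neg (Nat.succ_ne_zero e), mul_zero, sub_zero]

end FiniteProducts

/-! ### Orthogonality as an identity between moments -/

/-- The coefficient of `x ^ k` in the `q`-Laguerre polynomial `Lₙ^{(α)}(x; q)`, written in terms of
the parameter `a = q^{α+1}`. -/
noncomputable def qLagCoeff (a q : ℂ) (n k : ℕ) : ℂ :=
  qP a q n / qP q q n *
    (qP (q ^ n)⁻¹ q k / (qP q q k * qP a q k) * q ^ (k * (k - 1) / 2) * (q ^ n * a) ^ k)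

/-- The two-term recurrence satisfied by the moments `μ k = ∫ x^{α+k}/(-x;q)_∞ dx` of the
`q`-Laguerre weight, where `a = q^{α+1}`. It determines `μ` up to a constant factor, and is all
that orthogonality depends on. -/
def IsQLagMoment (a q : ℂ) (μ : ℕ → ℂ) : Prop :=
  ∀ k, a * q ^ k * μ (k + 1) = (1 - a * q ^ k) * μ k

section Orthogonality

variable {a q : ℂ} {μ : ℕ → ℂ}

namespace IsQLagMoment

lemma shift (hμ : IsQLagMoment a q μ) (j : ℕ) :
    IsQLagMoment (a * q ^ j) q fun k => μ (k + j) := by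
  intro k
  have h := hμ (k + j)
  rw [add_right_comm, pow_add, mul_comm (q ^ k), ← mul_assoc] at h
  exact h

lemma mul_eq (hμ : IsQLagMoment a q μ) (k : ℕ) :
    μ k * (a ^ k * q ^ (k * (k - 1) / 2)) = μ 0 * qP a q k := by
  induction k with
  | zero => simp [qP_zero]
  | succ k ih =>
    rw [Nat.triangle_succ, qP_succ]
    linear_combination (1 - a * q ^ k) * ih + a ^ k * q ^ (k * (k - 1) / 2) * hμ k

end IsQLagMoment

lemma sum_qLagCoeff_mul_moment (hμ : IsQLagMoment a q μ) (hq : q ≠ 0)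
    (hP : ∀ k, qP q q k ≠ 0) (ha : ∀ k, qP a q k ≠ 0) {n j : ℕ} (hj : j ≤ n) :
    ∑ k ∈ Finset.range (n + 1), qLagCoeff a q n k * μ (k + j) =
      if j = n then μ n * qP (q ^ n)⁻¹ q n / qP q q n else 0 := by
  obtain ⟨e, rfl⟩ := Nat.exists_eq_add_of_le hj
  have hterm : ∀ k, qLagCoeff a q (j + e) k * μ (k + j) =
      μ j * qP a q (j + e) / (qP q q (j + e) * qP a q j) *
        (qP (q ^ (j + e))⁻¹ q k / qP q q k * (q ^ e) ^ k * qP (a * q ^ k) q j) := by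
    intro k
    have hmom : μ (k + j) * ((a * q ^ j) ^ k * q ^ (k * (k - 1) / 2)) =
        μ j * qP (a * q ^ j) q k := by
      simpa only [zero_add] using (hμ.shift j).mul_eq k
    have hswap : qP a q j * qP (a * q ^ j) q k / qP a q k = qP (a * q ^ k) q j := by
      rw [qP_mul_qP_comm, mul_div_cancel_left₀ _ (ha k)]
    have hj0 := ha j
    calc qLagCoeff a q (j + e) k * μ (k + j)
        = qP a q (j + e) / qP q q (j + e) *
            (qP (q ^ (j + e))⁻¹ q k / (qP q q k * qP a q k) * (q ^ e) ^ k) *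
            (μ (k + j) * ((a * q ^ j) ^ k * q ^ (k * (k - 1) / 2))) := by
          rw [qLagCoeff, pow_add, mul_pow a, mul_pow _ a, mul_pow (q ^ j)]
          ring
      _ = _ := by
          rw [hmom, ← hswap]
          field_simp
  simp only [hterm]
  rw [← Finset.mul_sum, sum_qP_inv_pow_div_mul_qP hq hP a le_rfl]
  have hj0 := ha j
  rcases eq_or_ne e 0 with rfl | he
  · rw [if_pos rfl, if_pos (add_zero j).symm, add_zero]
    field_simp
  · rw [if_neg he, if_neg (by lia), mul_zero]

lemma qLagCoeff_self_mul (hμ : IsQLagMoment a q μ) (hq : q ≠ 0)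
    (hP : ∀ k, qP q q k ≠ 0) (ha : ∀ k, qP a q k ≠ 0) (n : ℕ) :
    qLagCoeff a q n n * (μ n * qP (q ^ n)⁻¹ q n / qP q q n) =
      μ 0 * qP a q n / (q ^ n * qP q q n) := by
  have hn := hP n
  have hn' := ha n
  have hsq := qP_inv_pow_self_sq hq n
  generalize hY : qP (q ^ n)⁻¹ q n = Y at hsq ⊢
  calc qLagCoeff a q n n * (μ n * Y / qP q q n)
      = q ^ (n * n) * Y ^ 2 / qP q q n ^ 3 *
          (μ n * (a ^ n * q ^ (n * (n - 1) / 2))) := by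
        rw [qLagCoeff, hY, mul_pow, ← pow_mul]
        field_simp
    _ = μ 0 * qP a q n / (q ^ n * qP q q n) := by
        rw [hμ.mul_eq]
        field_simp
        linear_combination (μ 0) * hsq

lemma sum_sum_qLagCoeff_mul_moment (hμ : IsQLagMoment a q μ) (hq : q ≠ 0)
    (hP : ∀ k, qP q q k ≠ 0) (ha : ∀ k, qP a q k ≠ 0) (m n : ℕ) :
    ∑ j ∈ Finset.range (m + 1), ∑ k ∈ Finset.range (n + 1),
        qLagCoeff a q m j * qLagCoeff a q n k * μ (j + k) =
      if m = n then μ 0 * qP a q n / (q ^ n * qP q q n) else 0 := by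
  wlog hmn : m ≤ n generalizing m n
  · rw [Finset.sum_comm]
    simp only [mul_comm (qLagCoeff a q m _), add_comm _ (_ : ℕ)]
    rw [this n m (le_of_not_ge hmn), if_neg (by lia), if_neg (by lia)]
  have hinner : ∀ j ∈ Finset.range (m + 1), ∑ k ∈ Finset.range (n + 1),
      qLagCoeff a q m j * qLagCoeff a q n k * μ (j + k) =
        if j = n then qLagCoeff a q m n * (μ n * qP (q ^ n)⁻¹ q n / qP q q n) else 0 := by
    intro j hj
    have hjn : j ≤ n := (Finset.mem_range_succ_iff.1 hj).trans hmn
    simp only [mul_assoc, ← Finset.mul_sum, add_comm j]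
    rw [sum_qLagCoeff_mul_moment hμ hq hP ha hjn]
    split_ifs with h
    · rw [h]
    · exact mul_zero _
  rw [Finset.sum_congr rfl hinner, Finset.sum_ite_eq' (Finset.range (m + 1)) n]
  rcases eq_or_ne m n with rfl | hne
  · simp only [Finset.mem_range, Nat.lt_succ_self, if_true, qLagCoeff_self_mul hμ hq hP ha]
  · rw [if_neg (by rw [Finset.mem_range]; lia), if_neg hne]

end Orthogonality

/-! ### Infinite `q`-shifted factorials -/

section InfiniteProducts

variable {q : ℂ}

lemma summable_norm_mul_pow (hq : ‖q‖ < 1) (a : ℂ) : Summable fun k : ℕ => ‖-(a * q ^ k)‖ := by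
  simpa only [norm_neg, norm_mul, norm_pow] using
    (summable_geometric_of_lt_one (norm_nonneg q) hq).mul_left ‖a‖

lemma tendsto_qP (hq : ‖q‖ < 1) (a : ℂ) : Tendsto (qP a q) atTop (𝓝 (qPInf a q)) := by
  have h := multipliable_one_add_of_summable (summable_norm_mul_pow hq a)
  simp only [← sub_eq_add_neg] at h
  exact h.hasProd.tendsto_prod_nat

lemma qPInf_eq_one_sub_mul (hq : ‖q‖ < 1) (a : ℂ) : qPInf a q = (1 - a) * qPInf (a * q) q := by
  refine tendsto_nhds_unique ((tendsto_qP hq a).comp (tendsto_add_atTop_nat 1)) ?_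
  refine ((tendsto_qP hq (a * q)).const_mul (1 - a)).congr fun n => ?_
  exact (qP_succ_left a q n).symm

lemma qPInf_ne_zero (hq : ‖q‖ < 1) {a : ℂ} (ha : ‖a‖ < 1) : qPInf a q ≠ 0 := by
  simpa only [qPInf, sub_eq_add_neg] using
    tprod_one_add_ne_zero_of_summable (f := fun k : ℕ => -(a * q ^ k))
      (fun k => by simpa only [sub_eq_add_neg] using one_sub_mul_pow_ne_zero ha hq.le k)
      (summable_norm_mul_pow hq a)

lemma differentiable_qPInf (hq : ‖q‖ < 1) : Differentiable ℂ fun a => qPInf a q := by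
  intro a
  have hbound : ∀ k : ℕ, ∀ z ∈ Metric.ball (0 : ℂ) (‖a‖ + 1),
      ‖-(z * q ^ k)‖ ≤ (‖a‖ + 1) * ‖q‖ ^ k := by
    intro k z hz
    rw [norm_neg, norm_mul, norm_pow]
    gcongr
    exact (mem_ball_zero_iff.1 hz).le
  have hprod := Summable.hasProdLocallyUniformlyOn_nat_one_add Metric.isOpen_ball
    ((summable_geometric_of_lt_one (norm_nonneg q) hq).mul_left (‖a‖ + 1))
    (Eventually.of_forall hbound) fun k => by fun_prop
  have hdiff := hprod.differentiableOn
    (.of_forall fun _ => by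
      simpa [Finset.prod_fn] using DifferentiableOn.finsetProd fun _ _ => by fun_prop)
    Metric.isOpen_ball
  simp only [← sub_eq_add_neg] at hdiff
  exact hdiff.differentiableAt (Metric.isOpen_ball.mem_nhds (by simp))

end InfiniteProducts

section NegativeArgument

variable {q x : ℝ}

lemma norm_qP_neg (hq : 0 ≤ q) (hx : 0 ≤ x) (N : ℕ) :
    ‖qP (-(x : ℂ)) q N‖ = ∏ k ∈ Finset.range N, (1 + x * q ^ k) := by
  rw [qP, norm_prod]
  refine Finset.prod_congr rfl fun k _ => ?_
  rw [neg_mul, sub_neg_eq_add]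
  exact_mod_cast Complex.norm_of_nonneg (by positivity : 0 ≤ 1 + x * q ^ k)

lemma monotone_norm_qP_neg (hq : 0 ≤ q) (hx : 0 ≤ x) : Monotone fun N => ‖qP (-(x : ℂ)) q N‖ := by
  simp only [norm_qP_neg hq hx]
  refine monotone_nat_of_le_succ fun N => ?_
  rw [Finset.prod_range_succ]
  exact le_mul_of_one_le_right (by positivity) (le_add_of_nonneg_right (by positivity))

lemma one_le_norm_qP_neg (hq : 0 ≤ q) (hx : 0 ≤ x) (N : ℕ) : 1 ≤ ‖qP (-(x : ℂ)) q N‖ := by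
  simpa [qP_zero] using monotone_norm_qP_neg hq hx N.zero_le

lemma prod_range_pow_pos (hq : 0 < q) (N : ℕ) : 0 < ∏ k ∈ Finset.range N, q ^ k := by positivity

lemma prod_pow_mul_rpow_le_norm_qP_neg (hq : 0 ≤ q) (hx : 0 ≤ x) (N : ℕ) :
    (∏ k ∈ Finset.range N, q ^ k) * x ^ (N : ℝ) ≤ ‖qP (-(x : ℂ)) q N‖ := by
  rw [Real.rpow_natCast, norm_qP_neg hq hx, ← Finset.card_range N, ← Finset.prod_const,
    Finset.card_range, ← Finset.prod_mul_distrib]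
  refine Finset.prod_le_prod (fun k _ => by positivity) fun k _ => ?_
  rw [mul_comm]
  exact le_add_of_nonneg_left zero_le_one

lemma qP_neg_ne_zero (hq : 0 ≤ q) (hx : 0 ≤ x) (N : ℕ) : qP (-(x : ℂ)) q N ≠ 0 :=
  norm_pos_iff.1 (zero_lt_one.trans_le (one_le_norm_qP_neg hq hx N))

lemma norm_ofReal_lt_one (hq : q ∈ Ioo 0 1) : ‖(q : ℂ)‖ < 1 := by
  rw [Complex.norm_of_nonneg hq.1.le]
  exact hq.2

lemma norm_qP_neg_le_norm_qPInf_neg (hq : q ∈ Ioo 0 1) (hx : 0 ≤ x) (N : ℕ) :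
    ‖qP (-(x : ℂ)) q N‖ ≤ ‖qPInf (-(x : ℂ)) q‖ :=
  (monotone_norm_qP_neg hq.1.le hx).ge_of_tendsto
    (tendsto_qP (norm_ofReal_lt_one hq) _).norm N

lemma one_le_norm_qPInf_neg (hq : q ∈ Ioo 0 1) (hx : 0 ≤ x) : 1 ≤ ‖qPInf (-(x : ℂ)) q‖ :=
  (one_le_norm_qP_neg hq.1.le hx 0).trans (norm_qP_neg_le_norm_qPInf_neg hq hx 0)

lemma prod_pow_mul_rpow_le_norm_qPInf_neg (hq : q ∈ Ioo 0 1) (hx : 0 ≤ x) (N : ℕ) :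
    (∏ k ∈ Finset.range N, q ^ k) * x ^ (N : ℝ) ≤ ‖qPInf (-(x : ℂ)) q‖ :=
  (prod_pow_mul_rpow_le_norm_qP_neg hq.1.le hx N).trans
    (norm_qP_neg_le_norm_qPInf_neg hq hx N)

lemma qPInf_neg_ne_zero (hq : q ∈ Ioo 0 1) (hx : 0 ≤ x) : qPInf (-(x : ℂ)) q ≠ 0 :=
  norm_pos_iff.1 (zero_lt_one.trans_le (one_le_norm_qPInf_neg hq hx))

lemma continuous_qPInf_neg (hq : q ∈ Ioo 0 1) : Continuous fun x : ℝ => qPInf (-(x : ℂ)) q :=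
  (differentiable_qPInf (norm_ofReal_lt_one hq)).continuous.comp
    Complex.continuous_ofReal.neg

lemma inv_qP_neg_eq_mul_inv_succ (hq : 0 ≤ q) (hx : 0 ≤ x) (N : ℕ) :
    (qP (-(x : ℂ)) q N)⁻¹ = (1 + (q : ℂ) ^ N * x) * (qP (-(x : ℂ)) q (N + 1))⁻¹ := by
  have h := qP_neg_ne_zero hq hx (N + 1)
  rw [qP_succ, neg_mul, sub_neg_eq_add, mul_comm (x : ℂ)] at h ⊢
  rw [mul_inv, mul_left_comm, mul_inv_cancel₀ (right_ne_zero_of_mul h), mul_one]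

lemma inv_qP_neg_mul_eq_mul_inv_succ (hq : 0 ≤ q) (hx : 0 ≤ x) (N : ℕ) :
    (qP (-((q * x : ℝ) : ℂ)) q N)⁻¹ = (1 + (x : ℂ)) * (qP (-(x : ℂ)) q (N + 1))⁻¹ := by
  have h := qP_neg_ne_zero hq hx (N + 1)
  rw [qP_succ_left, sub_neg_eq_add] at h ⊢
  rw [mul_inv, mul_inv_cancel_left₀ (left_ne_zero_of_mul h), Complex.ofReal_mul,
    mul_comm (q : ℂ), neg_mul]

lemma inv_qPInf_neg_mul (hq : q ∈ Ioo 0 1) (hx : 0 ≤ x) :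
    (qPInf (-((q * x : ℝ) : ℂ)) q)⁻¹ = (1 + (x : ℂ)) * (qPInf (-(x : ℂ)) q)⁻¹ := by
  have hprod := qPInf_eq_one_sub_mul (norm_ofReal_lt_one hq) (-(x : ℂ))
  have h := qPInf_neg_ne_zero hq hx
  rw [hprod, sub_neg_eq_add] at h
  rw [hprod, sub_neg_eq_add, mul_inv, mul_inv_cancel_left₀ (left_ne_zero_of_mul h),
    Complex.ofReal_mul, mul_comm (q : ℂ), neg_mul]

end NegativeArgument

/-! ### Mellin transforms -/

section Mellin

lemma mellin_congr {E : Type*} [NormedAddCommGroup E] [NormedSpace ℂ E] {f g : ℝ → E}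
    (h : EqOn f g (Ioi 0)) (s : ℂ) : mellin f s = mellin g s :=
  setIntegral_congr_fun measurableSet_Ioi fun _ hx => congrArg _ (h hx)

lemma mellin_one_add_mul {f : ℝ → ℂ} {s : ℂ} (c : ℂ) (h₀ : MellinConvergent f s)
    (h₁ : MellinConvergent f (s + 1)) :
    mellin (fun x => (1 + c * x) * f x) s = mellin f s + c * mellin f (s + 1) := by
  have h₁' : MellinConvergent (fun x : ℝ => (x : ℂ) ^ (1 : ℂ) • f x) s :=
    MellinConvergent.cpow_smul.2 h₁
  have h := (hasMellin_add h₀ (h₁'.const_smul c)).2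
  rw [mellin_const_smul, mellin_cpow_smul, smul_eq_mul] at h
  simpa only [Complex.cpow_one, smul_eq_mul, add_mul, one_mul, mul_assoc] using h

lemma cpow_neg_mul_mellin_eq_add {f g : ℝ → ℂ} {s : ℂ} {a : ℝ} (ha : 0 < a)
    (hfg : ∀ x : ℝ, 0 < x → f (a * x) = (1 + x) * g x) (h₀ : MellinConvergent g s)
    (h₁ : MellinConvergent g (s + 1)) :
    (a : ℂ) ^ (-s) * mellin f s = mellin g s + mellin g (s + 1) := by
  rw [← smul_eq_mul, ← mellin_comp_mul_left f s ha, mellin_congr (fun x hx => hfg x hx)]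
  simpa only [one_mul] using mellin_one_add_mul 1 h₀ h₁

lemma isBigO_inv_rpow {g : ℝ → ℂ} {b c : ℝ} (hc : 0 < c) (hg : ∀ x > 0, c * x ^ b ≤ ‖g x‖) :
    (fun x => (g x)⁻¹) =O[𝓟 (Ioi 0)] fun x => x ^ (-b) := by
  refine IsBigO.of_bound c⁻¹ (eventually_principal.2 fun x hx => ?_)
  have hx : 0 < x := hx
  have hxb : 0 < x ^ b := Real.rpow_pos_of_pos hx b
  rw [norm_inv, Real.rpow_neg hx.le, norm_inv, Real.norm_of_nonneg hxb.le, ← mul_inv]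
  exact inv_anti₀ (by positivity) (hg x hx)

section Growth

variable {g : ℝ → ℂ} {b c : ℝ} {s : ℂ}

lemma locallyIntegrableOn_inv (hg : ContinuousOn g (Ioi 0)) (h₁ : ∀ x > 0, 1 ≤ ‖g x‖) :
    LocallyIntegrableOn (fun x => (g x)⁻¹) (Ioi 0) :=
  (hg.inv₀ fun x hx => norm_pos_iff.1 (zero_lt_one.trans_le (h₁ x hx))).locallyIntegrableOn
    measurableSet_Ioi

lemma isBigO_inv_atTop (hc : 0 < c) (hgb : ∀ x > 0, c * x ^ b ≤ ‖g x‖) :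
    (fun x => (g x)⁻¹) =O[atTop] fun x => x ^ (-b) :=
  (isBigO_inv_rpow hc hgb).mono (le_principal_iff.2 (Ioi_mem_atTop 0))

lemma isBigO_inv_nhdsGT_zero (h₁ : ∀ x > 0, 1 ≤ ‖g x‖) :
    (fun x => (g x)⁻¹) =O[𝓝[>] 0] fun x => x ^ (-0 : ℝ) :=
  (isBigO_inv_rpow one_pos fun x hx => by simpa using h₁ x hx).mono inf_le_right

lemma mellinConvergent_inv (hg : ContinuousOn g (Ioi 0)) (h₁ : ∀ x > 0, 1 ≤ ‖g x‖) (hc : 0 < c)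
    (hgb : ∀ x > 0, c * x ^ b ≤ ‖g x‖) (hs : 0 < s.re) (hsb : s.re < b) :
    MellinConvergent (fun x => (g x)⁻¹) s :=
  mellinConvergent_of_isBigO_rpow (locallyIntegrableOn_inv hg h₁) (isBigO_inv_atTop hc hgb) hsb
    (isBigO_inv_nhdsGT_zero h₁) hs

lemma differentiableAt_mellin_inv (hg : ContinuousOn g (Ioi 0)) (h₁ : ∀ x > 0, 1 ≤ ‖g x‖)
    (hc : 0 < c) (hgb : ∀ x > 0, c * x ^ b ≤ ‖g x‖) (hs : 0 < s.re) (hsb : s.re < b) :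
    DifferentiableAt ℂ (mellin fun x => (g x)⁻¹) s :=
  mellin_differentiableAt_of_isBigO_rpow (locallyIntegrableOn_inv hg h₁) (isBigO_inv_atTop hc hgb)
    hsb (isBigO_inv_nhdsGT_zero h₁) hs

end Growth

lemma image_div_one_add_Ioi_zero : (fun x : ℝ => x / (1 + x)) '' Ioi 0 = Ioo 0 1 := by
  ext t
  constructor
  · rintro ⟨x, hx, rfl⟩
    have hx : 0 < x := hx
    exact ⟨by positivity, (div_lt_one (by positivity)).2 (lt_one_add x)⟩
  · rintro ⟨h₀, h₁⟩
    have h : 0 < 1 - t := sub_pos.2 h₁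
    exact ⟨t / (1 - t), div_pos h₀ h, by field_simp; ring⟩

lemma injOn_div_one_add_Ioi_zero : InjOn (fun x : ℝ => x / (1 + x)) (Ioi 0) := by
  intro x hx y hy h
  have hx : 0 < x := hx
  have hy : 0 < y := hy
  field_simp at h
  linarith

lemma hasDerivAt_div_one_add {x : ℝ} (hx : 1 + x ≠ 0) :
    HasDerivAt (fun x : ℝ => x / (1 + x)) (1 / (1 + x) ^ 2) x := by
  refine ((hasDerivAt_id x).div ((hasDerivAt_id x).const_add 1) hx).congr_deriv ?_
  simp

lemma mellin_one_add_cpow_neg (u v : ℂ) :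
    mellin (fun x => (1 + (x : ℂ)) ^ (-(u + v))) u = Complex.betaIntegral u v := by
  have hsubst := integral_image_eq_integral_abs_deriv_smul measurableSet_Ioi
    (fun x (hx : 0 < x) => (hasDerivAt_div_one_add (by positivity)).hasDerivWithinAt)
    injOn_div_one_add_Ioi_zero fun t : ℝ => (t : ℂ) ^ (u - 1) * (1 - (t : ℂ)) ^ (v - 1)
  rw [image_div_one_add_Ioi_zero, ← integral_Ioc_eq_integral_Ioo] at hsubst
  rw [Complex.betaIntegral, intervalIntegral.integral_of_le zero_le_one, hsubst, mellin]
  refine setIntegral_congr_fun measurableSet_Ioi fun x hx => ?_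
  have hx : 0 < x := hx
  have hx1 : 0 < 1 + x := by positivity
  have hx1' : (1 : ℂ) + x ≠ 0 := by exact_mod_cast hx1.ne'
  have hcompl : (1 : ℂ) - ((x / (1 + x) : ℝ) : ℂ) = (((1 + x)⁻¹ : ℝ) : ℂ) := by
    push_cast
    field_simp
    ring
  have hpow : (1 + (x : ℂ)) ^ (-(u + v)) =
      ((1 + (x : ℂ)) ^ 2)⁻¹ * ((1 + (x : ℂ)) ^ (u - 1))⁻¹ * ((1 + (x : ℂ)) ^ (v - 1))⁻¹ := by
    rw [← Complex.cpow_neg, ← Complex.cpow_neg, ← Complex.cpow_ofNat, ← Complex.cpow_neg,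
      ← Complex.cpow_add _ _ hx1', ← Complex.cpow_add _ _ hx1']
    ring_nf
  have hinv : ∀ w : ℂ, (((1 + x)⁻¹ : ℝ) : ℂ) ^ w = ((1 + (x : ℂ)) ^ w)⁻¹ := by
    intro w
    rw [Complex.ofReal_inv, Complex.inv_cpow _ _ (by
      rw [Complex.arg_ofReal_of_nonneg hx1.le]; exact Real.pi_ne_zero.symm)]
    push_cast
    rfl
  have hdiv : ((x / (1 + x) : ℝ) : ℂ) ^ (u - 1) =
      (x : ℂ) ^ (u - 1) * ((1 + (x : ℂ)) ^ (u - 1))⁻¹ := by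
    rw [← hinv, ← Complex.mul_cpow_ofReal_nonneg hx.le (by positivity), ← Complex.ofReal_mul,
      div_eq_mul_inv]
  simp only [hcompl, hpow, hdiv, hinv, smul_eq_mul, Complex.real_smul]
  rw [abs_of_pos (by positivity)]
  push_cast
  ring

lemma mellin_inv_one_add {s : ℂ} (hs₀ : 0 < s.re) (hs₁ : s.re < 1) :
    mellin (fun x => (1 + (x : ℂ))⁻¹) s = π / Complex.sin (π * s) := by
  have hbeta := mellin_one_add_cpow_neg s (1 - s)
  simp only [add_sub_cancel, Complex.cpow_neg_one] at hbeta
  rw [hbeta, ← Complex.Gamma_mul_Gamma_one_sub,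
    Complex.Gamma_mul_Gamma_eq_betaIntegral hs₀ (by simpa using hs₁), add_sub_cancel,
    Complex.Gamma_one, one_mul]

end Mellin

/-! ### The Mellin transform of the `q`-Laguerre weight -/

/-- The Mellin transform of `1 / (-x;q)_∞`. The moments of the `q`-Laguerre weight are its values
at `α + 1, α + 2, …`. -/
noncomputable def qMellin (q : ℝ) : ℂ → ℂ := mellin fun x => (qPInf (-(x : ℂ)) q)⁻¹

/-- The Mellin transform of `1 / (-x;q)_N`, which tends to `qMellin q` as `N → ∞`. -/
noncomputable def qMellinTrunc (q : ℝ) (N : ℕ) : ℂ → ℂ := mellin fun x => (qP (-(x : ℂ)) q N)⁻¹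

section Truncated

variable {q : ℝ} {N : ℕ} {s : ℂ}

lemma mellinConvergent_inv_qP_neg (hq : 0 < q) (hs : 0 < s.re) (hsN : s.re < N) :
    MellinConvergent (fun x => (qP (-(x : ℂ)) q N)⁻¹) s := by
  have hcont : Continuous fun x : ℝ => qP (-(x : ℂ)) q N := by
    unfold qP
    fun_prop
  exact mellinConvergent_inv hcont.continuousOn (fun x hx => one_le_norm_qP_neg hq.le hx.le N)
    (prod_range_pow_pos hq N) (fun x hx => prod_pow_mul_rpow_le_norm_qP_neg hq.le hx.le N) hs hsN

lemma qMellinTrunc_succ (hq : 0 < q) (hs : 0 < s.re) (hsN : s.re < N) :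
    (1 - (q : ℂ) ^ N) * qMellinTrunc q (N + 1) s =
      (1 - (q : ℂ) ^ N * (q : ℂ) ^ (-s)) * qMellinTrunc q N s := by
  have h₀ := mellinConvergent_inv_qP_neg (N := N + 1) hq hs (by push_cast; linarith)
  have h₁ := mellinConvergent_inv_qP_neg (N := N + 1) (s := s + 1) hq
    (by rw [Complex.add_re, Complex.one_re]; linarith)
    (by rw [Complex.add_re, Complex.one_re]; push_cast; linarith)
  have hlast : qMellinTrunc q N s =
      qMellinTrunc q (N + 1) s + (q : ℂ) ^ N * qMellinTrunc q (N + 1) (s + 1) :=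
    (mellin_congr (fun x hx => inv_qP_neg_eq_mul_inv_succ hq.le (le_of_lt hx) N) s).trans
      (mellin_one_add_mul _ h₀ h₁)
  have hfirst : (q : ℂ) ^ (-s) * qMellinTrunc q N s =
      qMellinTrunc q (N + 1) s + qMellinTrunc q (N + 1) (s + 1) :=
    cpow_neg_mul_mellin_eq_add hq
      (fun x hx => inv_qP_neg_mul_eq_mul_inv_succ hq.le hx.le N) h₀ h₁
  linear_combination (q : ℂ) ^ N * hfirst - hlast

lemma qMellinTrunc_succ_mul_qP (hq : 0 < q) (hs₀ : 0 < s.re) (hs₁ : s.re < 1) (N : ℕ) :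
    qMellinTrunc q (N + 1) s * qP q q N = qP ((q : ℂ) ^ (1 - s)) q N * qMellinTrunc q 1 s := by
  induction N with
  | zero => simp [qP_zero]
  | succ N ih =>
    have hrec := qMellinTrunc_succ (N := N + 1) hq hs₀ (by push_cast; linarith)
    have hpow : (q : ℂ) ^ (1 - s) = q * (q : ℂ) ^ (-s) := by
      rw [sub_eq_add_neg, Complex.cpow_add _ _ (Complex.ofReal_ne_zero.2 hq.ne'),
        Complex.cpow_one]
    rw [hpow] at ih ⊢
    rw [qP_succ, qP_succ]
    linear_combination qP q q N * hrec + (1 - (q : ℂ) ^ (N + 1) * (q : ℂ) ^ (-s)) * ih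

lemma qMellinTrunc_one (hs₀ : 0 < s.re) (hs₁ : s.re < 1) :
    qMellinTrunc q 1 s = π / Complex.sin (π * s) := by
  simpa [qMellinTrunc, qP_succ, qP_zero] using mellin_inv_one_add hs₀ hs₁

end Truncated

section Ramanujan

variable {q : ℝ} {s : ℂ}

lemma mellinConvergent_inv_qPInf_neg (hq : q ∈ Ioo 0 1) (hs : 0 < s.re) :
    MellinConvergent (fun x => (qPInf (-(x : ℂ)) q)⁻¹) s :=
  have ⟨N, hN⟩ := exists_nat_gt s.re
  mellinConvergent_inv (continuous_qPInf_neg hq).continuousOn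
    (fun _ hx => one_le_norm_qPInf_neg hq hx.le) (prod_range_pow_pos hq.1 N)
    (fun _ hx => prod_pow_mul_rpow_le_norm_qPInf_neg hq hx.le N) hs hN

lemma differentiableAt_qMellin (hq : q ∈ Ioo 0 1) (hs : 0 < s.re) :
    DifferentiableAt ℂ (qMellin q) s :=
  have ⟨N, hN⟩ := exists_nat_gt s.re
  differentiableAt_mellin_inv (continuous_qPInf_neg hq).continuousOn
    (fun _ hx => one_le_norm_qPInf_neg hq hx.le) (prod_range_pow_pos hq.1 N)
    (fun _ hx => prod_pow_mul_rpow_le_norm_qPInf_neg hq hx.le N) hs hN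

lemma qMellin_add_one (hq : q ∈ Ioo 0 1) (hs : 0 < s.re) :
    qMellin q (s + 1) = ((q : ℂ) ^ (-s) - 1) * qMellin q s := by
  have hs₁ : 0 < (s + 1).re := by rw [Complex.add_re, Complex.one_re]; linarith
  have h : (q : ℂ) ^ (-s) * qMellin q s = qMellin q s + qMellin q (s + 1) :=
    cpow_neg_mul_mellin_eq_add hq.1 (fun x hx => inv_qPInf_neg_mul hq hx.le)
      (mellinConvergent_inv_qPInf_neg hq hs) (mellinConvergent_inv_qPInf_neg hq hs₁)
  linear_combination -h

lemma tendsto_qMellinTrunc (hq : q ∈ Ioo 0 1) (hs : 0 < s.re) :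
    Tendsto (fun N => qMellinTrunc q N s) atTop (𝓝 (qMellin q s)) := by
  obtain ⟨K, hK⟩ := exists_nat_gt s.re
  refine tendsto_integral_filter_of_dominated_convergence
    (fun x : ℝ => ‖(x : ℂ) ^ (s - 1) • (qP (-(x : ℂ)) q K)⁻¹‖) ?_ ?_
    (mellinConvergent_inv_qP_neg hq.1 hs hK).norm ?_
  · filter_upwards [eventually_ge_atTop K] with N hN
    exact (mellinConvergent_inv_qP_neg hq.1 hs
      (hK.trans_le (Nat.cast_le.2 hN))).aestronglyMeasurable
  · filter_upwards [eventually_ge_atTop K] with N hN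
    filter_upwards [ae_restrict_mem measurableSet_Ioi] with x hx
    have hx : 0 < x := hx
    rw [norm_smul, norm_smul, norm_inv, norm_inv]
    gcongr
    · exact zero_lt_one.trans_le (one_le_norm_qP_neg hq.1.le hx.le K)
    · exact monotone_norm_qP_neg hq.1.le hx.le hN
  · filter_upwards [ae_restrict_mem measurableSet_Ioi] with x hx
    exact ((tendsto_qP (norm_ofReal_lt_one hq) _).inv₀
      (qPInf_neg_ne_zero hq (le_of_lt hx))).const_smul _

lemma mem_integerComplement_of_re_mem_Ioo (hs : s.re ∈ Ioo 0 1) :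
    s ∈ Complex.integerComplement := by
  rintro ⟨k, rfl⟩
  rw [Complex.intCast_re, mem_Ioo] at hs
  norm_cast at hs
  lia

lemma qMellin_mul_sin_of_re_lt_one (hq : q ∈ Ioo 0 1) (hs₀ : 0 < s.re) (hs₁ : s.re < 1) :
    qMellin q s * qPInf q q * Complex.sin (π * s) = π * qPInf ((q : ℂ) ^ (1 - s)) q := by
  have hqn := norm_ofReal_lt_one hq
  have hlim : qMellin q s * qPInf q q =
      qPInf ((q : ℂ) ^ (1 - s)) q * (π / Complex.sin (π * s)) := by
    refine tendsto_nhds_unique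
      (((tendsto_qMellinTrunc hq hs₀).comp (tendsto_add_atTop_nat 1)).mul (tendsto_qP hqn q)) ?_
    refine ((tendsto_qP hqn _).mul_const _).congr fun N => ?_
    rw [← qMellinTrunc_one hs₀ hs₁]
    exact (qMellinTrunc_succ_mul_qP hq.1 hs₀ hs₁ N).symm
  have hsin := sin_pi_mul_ne_zero (mem_integerComplement_of_re_mem_Ioo ⟨hs₀, hs₁⟩)
  rw [hlim, mul_assoc, div_mul_cancel₀ _ hsin, mul_comm]

/-- Ramanujan's `q`-beta integral. -/
lemma qMellin_mul_sin (hq : q ∈ Ioo 0 1) (hs : 0 < s.re) :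
    qMellin q s * qPInf q q * Complex.sin (π * s) = π * qPInf ((q : ℂ) ^ (1 - s)) q := by
  have hopen : IsOpen {z : ℂ | 0 < z.re} := isOpen_lt continuous_const Complex.continuous_re
  have hleft : DifferentiableOn ℂ
      (fun z => qMellin q z * qPInf q q * Complex.sin (π * z)) {z | 0 < z.re} := fun z hz =>
    (((differentiableAt_qMellin hq hz).mul_const _).mul (by fun_prop)).differentiableWithinAt
  have hright : Differentiable ℂ fun z : ℂ => (π : ℂ) * qPInf ((q : ℂ) ^ (1 - z)) q :=
    ((differentiable_qPInf (norm_ofReal_lt_one hq)).comp fun z =>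
      ((differentiableAt_id.const_sub 1).const_cpow
        (Or.inl (Complex.ofReal_ne_zero.2 hq.1.ne')))).const_mul _
  have hstrip : {z : ℂ | 0 < z.re ∧ z.re < 1} ∈ 𝓝 (1 / 2 : ℂ) :=
    (hopen.inter (isOpen_lt Complex.continuous_re continuous_const)).mem_nhds
      (by norm_num)
  exact (hleft.analyticOnNhd hopen).eqOn_of_preconnected_of_eventuallyEq
    (hright.differentiableOn.analyticOnNhd hopen)
    (convex_halfSpace_re_gt 0).isPreconnected (z₀ := 1 / 2) (by norm_num)
    (eventually_of_mem hstrip fun z hz => qMellin_mul_sin_of_re_lt_one hq hz.1 hz.2) hs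

/- Since `1/(-qx;q)_∞ - 1/(-x;q)_∞ = x/(-x;q)_∞`, this is a Frullani integral. -/
lemma qMellin_one (hq : q ∈ Ioo 0 1) : qMellin q 1 = -(Real.log q : ℂ) := by
  let g : ℝ → ℂ := fun x => (qPInf (-(x : ℂ)) q)⁻¹
  have hg : ∀ x ∈ Ioi 0, x⁻¹ • (g (q * x) - g (1 * x)) = (x : ℂ) ^ ((1 : ℂ) - 1) • g x := by
    intro x hx
    have hx0 : (x : ℂ) ≠ 0 := Complex.ofReal_ne_zero.2 (ne_of_gt hx)
    simp only [g, inv_qPInf_neg_mul hq (le_of_lt hx), one_mul, sub_self, Complex.cpow_zero,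
      one_smul, Complex.real_smul, Complex.ofReal_inv]
    field_simp
    ring
  have hcont : Continuous fun x : ℝ => qPInf (-(x : ℂ)) q := continuous_qPInf_neg hq
  have hzero : Tendsto g (𝓝[>] 0) (𝓝 1) := by
    have h0 : g 0 = 1 := by simp [g, qPInf]
    rw [← h0]
    exact ((hcont.tendsto 0).inv₀ (qPInf_neg_ne_zero hq le_rfl)).mono_left inf_le_left
  have htop : Tendsto g atTop (𝓝 0) :=
    (isBigO_inv_atTop (prod_range_pow_pos hq.1 1)
      fun _ hx => prod_pow_mul_rpow_le_norm_qPInf_neg hq hx.le 1).trans_tendsto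
        (tendsto_rpow_neg_atTop (by norm_num))
  have hfrullani := Frullani.integral_Ioi_eq
    (locallyIntegrableOn_inv hcont.continuousOn fun x hx => one_le_norm_qPInf_neg hq hx.le)
    hq.1 one_pos hzero htop
    ((mellinConvergent_inv_qPInf_neg hq (by simp)).congr_fun (fun x hx => (hg x hx).symm)
      measurableSet_Ioi)
  calc qMellin q 1 = ∫ x in Ioi 0, x⁻¹ • (g (q * x) - g (1 * x)) :=
        (setIntegral_congr_fun measurableSet_Ioi hg).symm
    _ = Real.log (1 / q) • (1 - 0 : ℂ) := hfrullani
    _ = -(Real.log q : ℂ) := by simp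

end Ramanujan

section Moments

variable {q : ℝ} {s : ℂ}

lemma isQLagMoment_qMellin (hq : q ∈ Ioo 0 1) (hs : 0 < s.re) :
    IsQLagMoment ((q : ℂ) ^ s) q fun k => qMellin q (s + k) := by
  intro k
  have hq0 : (q : ℂ) ≠ 0 := Complex.ofReal_ne_zero.2 hq.1.ne'
  have hre : 0 < (s + k).re := by
    rw [Complex.add_re, Complex.natCast_re]
    positivity
  have hcancel : (q : ℂ) ^ s * (q : ℂ) ^ k * (q : ℂ) ^ (-(s + k)) = 1 := by
    rw [← Complex.cpow_natCast, ← Complex.cpow_add _ _ hq0, ← Complex.cpow_add _ _ hq0,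
      add_neg_cancel, Complex.cpow_zero]
  beta_reduce
  rw [Nat.cast_succ, ← add_assoc, qMellin_add_one hq hre]
  linear_combination qMellin q (s + k) * hcancel

lemma qMellin_one_add_natCast (hq : q ∈ Ioo 0 1) (k : ℕ) :
    qMellin q (1 + k) * (q : ℂ) ^ ((k + 1) * k / 2) = -(Real.log q : ℂ) * qP q q k := by
  have h := (isQLagMoment_qMellin hq (s := 1) (by simp)).mul_eq k
  rw [Complex.cpow_one, Nat.cast_zero, add_zero, qMellin_one hq] at h
  rw [← h, ← pow_add, add_comm k (_ / 2), ← Nat.triangle_succ, Nat.add_sub_cancel]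

end Moments

/-! ### The `q`-Laguerre polynomials -/

section QLaguerre

variable {q α : ℝ}

lemma rq_eq_cpow (hq : 0 ≤ q) (e : ℝ) : rq q e = (q : ℂ) ^ (e : ℂ) := Complex.ofReal_cpow hq e

lemma rq_add (hq : 0 < q) (x y : ℝ) : rq q (x + y) = rq q x * rq q y := by
  simp only [rq, Real.rpow_add hq, Complex.ofReal_mul]

lemma rq_natCast (q : ℝ) (n : ℕ) : rq q n = (q : ℂ) ^ n := by
  simp only [rq, Real.rpow_natCast, Complex.ofReal_pow]

lemma rq_triangle (q : ℝ) (k : ℕ) : rq q (k * (k + 1) / 2) = (q : ℂ) ^ ((k + 1) * k / 2) := by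
  rw [← rq_natCast, Nat.cast_div (by simpa [mul_comm] using (Nat.even_mul_succ_self k).two_dvd)
    two_ne_zero]
  push_cast
  rw [mul_comm]

lemma norm_rq_lt_one (hq : q ∈ Ioo 0 1) {e : ℝ} (he : 0 < e) : ‖rq q e‖ < 1 := by
  rw [rq, Complex.norm_of_nonneg (Real.rpow_nonneg hq.1.le _)]
  exact Real.rpow_lt_one hq.1.le hq.2 he

lemma qLag_eq_sum (hq : 0 < q) (n : ℕ) (α : ℝ) (x : ℂ) :
    qLag n α q x = ∑ k ∈ Finset.range (n + 1), qLagCoeff (rq q (α + 1)) q n k * x ^ k := by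
  have hq0 : (q : ℂ) ≠ 0 := Complex.ofReal_ne_zero.2 hq.ne'
  rw [qLag, qHyp, tsum_eq_sum (s := Finset.range (n + 1)), Finset.mul_sum]
  · refine Finset.sum_congr rfl fun k _ => ?_
    have hsign : ((-1 : ℂ) ^ k) * (-1) ^ k = 1 := by rw [← mul_pow]; simp
    rw [add_assoc (n : ℝ), rq_add hq (n : ℝ), rq_natCast, mul_pow, neg_pow, qLagCoeff]
    simp only [List.map_cons, List.map_nil, List.prod_cons, List.prod_nil, mul_one,
      List.length_cons, List.length_nil, zpow_neg, zpow_natCast, zero_add, Nat.add_sub_cancel,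
      pow_one]
    linear_combination (qP (rq q (α + 1)) q n / qP q q n *
      (qP ((q : ℂ) ^ n)⁻¹ q k / (qP q q k * qP (rq q (α + 1)) q k) * (q : ℂ) ^ (k * (k - 1) / 2) *
        ((q : ℂ) ^ n * rq q (α + 1)) ^ k)) * x ^ k * hsign
  · intro k hk
    have hk : n < k := by simpa using hk
    simp [qP_inv_pow_eq_zero hq0 hk]

lemma qLag_mul_qLag_mul_weight (hq : 0 < q) (α : ℝ) (m n : ℕ) {x : ℝ} (hx : 0 < x) :
    qLag m α q x * qLag n α q x * ((x ^ α : ℝ) : ℂ) / qPInf (-(x : ℂ)) q =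
      ∑ j ∈ Finset.range (m + 1), ∑ k ∈ Finset.range (n + 1),
        qLagCoeff (rq q (α + 1)) q m j * qLagCoeff (rq q (α + 1)) q n k *
          ((x : ℂ) ^ ((α : ℂ) + 1 + (j + k : ℕ) - 1) • (qPInf (-(x : ℂ)) q)⁻¹) := by
  rw [qLag_eq_sum hq, qLag_eq_sum hq, Finset.sum_mul_sum, Finset.sum_mul, Finset.sum_div]
  refine Finset.sum_congr rfl fun j _ => ?_
  rw [Finset.sum_mul, Finset.sum_div]
  refine Finset.sum_congr rfl fun k _ => ?_
  rw [add_right_comm, add_sub_cancel_right,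
    Complex.cpow_add _ _ (Complex.ofReal_ne_zero.2 hx.ne'), Complex.cpow_natCast, pow_add,
    Complex.ofReal_cpow hx.le, smul_eq_mul]
  ring

lemma integral_qLag_mul_qLag_eq_sum (hq : q ∈ Ioo 0 1) (hα : -1 < α) (m n : ℕ) :
    ∫ x in Ioi (0 : ℝ), qLag m α q x * qLag n α q x * ((x ^ α : ℝ) : ℂ) / qPInf (-(x : ℂ)) q =
      ∑ j ∈ Finset.range (m + 1), ∑ k ∈ Finset.range (n + 1),
        qLagCoeff (rq q (α + 1)) q m j * qLagCoeff (rq q (α + 1)) q n k *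
          qMellin q (α + 1 + (j + k : ℕ)) := by
  have hint : ∀ i : ℕ, MellinConvergent (fun x => (qPInf (-(x : ℂ)) q)⁻¹) (α + 1 + i) :=
    fun i => mellinConvergent_inv_qPInf_neg hq <| by
      simp only [Complex.add_re, Complex.ofReal_re, Complex.one_re, Complex.natCast_re]
      linarith [i.cast_nonneg (α := ℝ)]
  rw [setIntegral_congr_fun measurableSet_Ioi fun x hx =>
      qLag_mul_qLag_mul_weight hq.1 α m n hx,
    integral_finsetSum _ fun j _ => integrable_finsetSum _ fun k _ => (hint (j + k)).const_mul _]
  refine Finset.sum_congr rfl fun j _ => ?_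
  rw [integral_finsetSum _ fun k _ => (hint (j + k)).const_mul _]
  exact Finset.sum_congr rfl fun k _ => integral_const_mul _ _

lemma integral_qLag_mul_qLag (hq : q ∈ Ioo 0 1) (hα : -1 < α) (m n : ℕ) :
    ∫ x in Ioi (0 : ℝ), qLag m α q x * qLag n α q x * ((x ^ α : ℝ) : ℂ) / qPInf (-(x : ℂ)) q =
      if m = n then qMellin q (α + 1) * qP (rq q (α + 1)) q n / ((q : ℂ) ^ n * qP q q n)
      else 0 := by
  have hq1 := norm_ofReal_lt_one hq
  have hα1 : 0 < α + 1 := by linarith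
  have hmom := isQLagMoment_qMellin hq (s := ((α + 1 : ℝ) : ℂ)) (by simpa using hα1)
  rw [← rq_eq_cpow hq.1.le] at hmom
  simpa only [Nat.cast_zero, add_zero, Complex.ofReal_add, Complex.ofReal_one,
    ← integral_qLag_mul_qLag_eq_sum hq hα] using
    sum_sum_qLagCoeff_mul_moment hmom (Complex.ofReal_ne_zero.2 hq.1.ne') (qP_ne_zero hq1 hq1.le)
      (qP_ne_zero (norm_rq_lt_one hq hα1) hq1.le) m n

lemma qMellin_add_one_of_not_natCast (hq : q ∈ Ioo 0 1) (hα : -1 < α) (hk : ¬∃ k : ℕ, α = k) :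
    qMellin q (α + 1) =
      -(π * qPInf (rq q (-α)) q / ((Real.sin (π * α) : ℂ) * qPInf q q)) := by
  have hint : (α : ℂ) ∈ Complex.integerComplement := by
    rintro ⟨z, hz⟩
    have hz : (z : ℝ) = α := by exact_mod_cast hz
    have hz0 : -1 < z := by rw [← hz] at hα; exact_mod_cast hα
    lift z to ℕ using by lia
    exact hk ⟨z, by simpa using hz.symm⟩
  have hsin : (Real.sin (π * α) : ℂ) ≠ 0 := by simpa using sin_pi_mul_ne_zero hint
  have hq1 := norm_ofReal_lt_one hq
  have hqq : qPInf q q ≠ 0 := qPInf_ne_zero hq1 hq1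
  have h := qMellin_mul_sin hq (s := α + 1) (by simp; linarith)
  rw [mul_add, mul_one, Complex.sin_add_pi, sub_add_cancel_right, ← Complex.ofReal_neg,
    ← rq_eq_cpow hq.1.le, ← Complex.ofReal_mul, ← Complex.ofReal_sin] at h
  rw [← neg_div, eq_div_iff (mul_ne_zero hsin hqq)]
  linear_combination -h

lemma qMellin_mul_qP_div_qP_of_eq_natCast (hq : q ∈ Ioo 0 1) {k : ℕ} (hk : α = k) (n : ℕ) :
    qMellin q (α + 1) * qP (rq q (α + 1)) q n / qP q q n =
      -(qP ((q : ℂ) ^ (n + 1)) q k * (Real.log q : ℂ) / rq q (α * (α + 1) / 2)) := by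
  subst hk
  have hq0 : (q : ℂ) ≠ 0 := Complex.ofReal_ne_zero.2 hq.1.ne'
  have hq1 := norm_ofReal_lt_one hq
  have hbase : rq q (k + 1) = q * (q : ℂ) ^ k := by
    rw [← pow_succ', ← rq_natCast, Nat.cast_succ]
  have hcomm : qP (q : ℂ) q k * qP (rq q (k + 1)) q n =
      qP q q n * qP ((q : ℂ) ^ (n + 1)) q k := by
    rw [hbase, qP_mul_qP_comm, pow_succ']
  have hmom := qMellin_one_add_natCast hq k
  rw [rq_triangle, ← neg_div, div_eq_div_iff (qP_ne_zero hq1 hq1.le n) (pow_ne_zero _ hq0),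
    add_comm _ (1 : ℂ), Complex.ofReal_natCast]
  linear_combination qP (rq q (k + 1)) q n * hmom - (Real.log q : ℂ) * hcomm

end QLaguerre

theorem stmt19 (q : ℝ) (hq : q ∈ Set.Ioo (0:ℝ) 1)
    (α : ℝ) (hα : -1 < α) (m n : ℕ) :
    (¬ (∃ k : ℕ, α = k) →
      ∫ x in Set.Ioi (0:ℝ),
          qLag m α q x * qLag n α q x * ((x ^ α : ℝ) : ℂ) / qPInf (-(x : ℂ)) q =
        -((if m = n then (1 : ℂ) else 0) / (q : ℂ) ^ n) *
          ((π : ℂ) * qPInf (rq q (-α)) q * qP (rq q (α + 1)) q n /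
            ((Real.sin (π * α) : ℂ) * qPInf q q * qP q q n))) ∧
    (∀ k : ℕ, α = k →
      ∫ x in Set.Ioi (0:ℝ),
          qLag m α q x * qLag n α q x * ((x ^ α : ℝ) : ℂ) / qPInf (-(x : ℂ)) q =
        -((if m = n then (1 : ℂ) else 0) / (q : ℂ) ^ n) *
          (qP ((q : ℂ) ^ (n + 1)) q k * (Real.log q : ℂ) / rq q (α * (α + 1) / 2))) := by
  rw [integral_qLag_mul_qLag hq hα]
  refine ⟨fun hk => ?_, fun k hk => ?_⟩
  · rw [qMellin_add_one_of_not_natCast hq hα hk]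
    split_ifs <;> ring
  · rw [mul_comm ((q : ℂ) ^ n), ← div_div, qMellin_mul_qP_div_qP_of_eq_natCast hq hk]
    split_ifs <;> ring
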